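/- Let i ≥ 1, L ≥ 1 and nonnegative integers a_1,…,a_i with a_i ≥ a_j for all j ∈ [i] be given, and set K = (i−1)L + Σ_{j=1}^{i} a_j + 1. Consider the coloring of the nodes of the (a_i,…,a_1)_L-bar-ICP that assigns, for each c ∈ [K], color c to the nodes (<c + Σ_{m=1}^{v−1} a_m + (v−1)L>_K, v) for v ∈ [i]. Then for every node (k,t), the number of distinct colors appearing on the closed anti-outneighborhood of (k,t) — the set consisting of (k,t) itself together with all interference nodes of (k,t) — is at most min{ 2(K−(i−1)L) + i − 2 − a_i , K }. -/

import Mathlib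

open Finset

/-- `<m>_n`: the unique element of `{1,…,n}` congruent to `m` modulo `n`. -/
def angMod (m : ℤ) (n : ℕ) : ℕ :=
  if m % (n : ℤ) = 0 then n else (m % (n : ℤ)).toNat

/-- The side-information index set `K_k` of user `k` in the
`(a_i,…,a_1)_L`-bar-ICP, as a set of nodes `(b,t)`. -/
def knownIdx (K i L : ℕ) (a : ℕ → ℕ) (k : ℕ) : Set (ℕ × ℕ) :=
  {p | ∃ t ∈ Finset.Icc 1 i, ∃ v ∈ Finset.Icc 1 (i - 1), ∃ r ∈ Finset.Icc 1 L,
    p.2 = t ∧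
    p.1 = angMod ((k : ℤ) + (∑ j ∈ Finset.Icc 1 v, (a (angMod ((i : ℤ) + (t : ℤ) - (j : ℤ)) i) : ℤ))
        + ((v : ℤ) - 1) * (L : ℤ) + (r : ℤ)) K}

/-- The closed anti-outneighborhood of node `(k,t)`: the node itself together
with all of its interference nodes. -/
def closedAnti (K i L : ℕ) (a : ℕ → ℕ) (k t : ℕ) : Set (ℕ × ℕ) :=
  {p | p.1 ∈ Finset.Icc 1 K ∧ p.2 ∈ Finset.Icc 1 i ∧
    (p = (k, t) ∨ (p.1 ≠ k ∧ p ∉ knownIdx K i L a k))}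

/-!
Continue `a` periodically and lay blocks of lengths `a_1, L, a_2, L, a_3, L, …` end to end, so that
the `n`-th `L`-block ends at `offset n`. The color of `(b, s)` is `b - offset (s - 1)` modulo `K`.
Measured backwards from `k`, the colors that row `s` contributes to the side information of user `k`
are the `L`-blocks numbered `s, …, s + i - 2`. Since `offset` increases by `K - 1 + L` over a
period, what lies strictly between `offset (s - 1)` and `offset (s - 1) + K` consists of these
blocks and the gaps numbered `s, …, s + i - 1`. Hence the interference nodes of all rows together
only use colors from the first `2 * i - 1` gaps, whose lengths add up to
`2 * (a_1 + ⋯ + a_i) - a_i`.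
-/

section Residue

variable {m m' : ℤ} {n b k : ℕ}

lemma angMod_congr (h : m ≡ m' [ZMOD n]) : angMod m n = angMod m' n := by
  rw [angMod, angMod, h.eq]

lemma angMod_mem_Icc (m : ℤ) (hn : 0 < n) : angMod m n ∈ Icc 1 n := by
  have hnonneg := Int.emod_nonneg m (show (n : ℤ) ≠ 0 by omega)
  have hlt := Int.emod_lt_of_pos m (show (0 : ℤ) < n by omega)
  rw [mem_Icc, angMod]
  split_ifs <;> omega

lemma angMod_modEq (m : ℤ) (hn : 0 < n) : (angMod m n : ℤ) ≡ m [ZMOD n] := by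
  have hnonneg := Int.emod_nonneg m (show (n : ℤ) ≠ 0 by omega)
  rw [angMod]
  split_ifs with h
  · exact Int.emod_self.trans h.symm
  · rw [Int.toNat_of_nonneg hnonneg]
    exact Int.mod_modEq m n

lemma angMod_natCast (hb : b ∈ Icc 1 n) : angMod b n = b := by
  rw [mem_Icc] at hb
  rcases hb.2.eq_or_lt with rfl | hlt
  · simp [angMod]
  · have hmod : (b : ℤ) % n = b := Int.emod_eq_of_lt (by omega) (by omega)
    rw [angMod, hmod, if_neg (by omega), Int.toNat_natCast]

lemma angMod_eq_of_modEq (hb : b ∈ Icc 1 n) (h : m ≡ b [ZMOD n]) : angMod m n = b :=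
  (angMod_congr h).trans (angMod_natCast hb)

lemma exists_sub_modEq_of_ne (hk : k ∈ Icc 1 n) (hb : b ∈ Icc 1 n) (hbk : b ≠ k) :
    ∃ d : ℤ, 0 < d ∧ d < n ∧ k - d ≡ b [ZMOD n] := by
  rw [mem_Icc] at hk hb
  have hndvd : ¬ (n : ℤ) ∣ k - b := fun hdvd => by
    have := Int.eq_zero_of_abs_lt_dvd hdvd (by rw [abs_lt]; omega)
    omega
  refine ⟨(k - b) % n, (Int.emod_pos_of_not_dvd hndvd).resolve_left (by omega),
    Int.emod_lt_of_pos _ (by omega), ?_⟩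
  simpa using (Int.ModEq.refl (k : ℤ)).sub (Int.mod_modEq (k - b) n)

end Residue

lemma exists_mem_Ioc_of_monotone {α : Type*} [LinearOrder α] {f : ℕ → α} (hf : Monotone f)
    {m n : ℕ} {y : α} (hm : f m < y) (hn : y ≤ f n) :
    ∃ l ∈ Set.Ico m n, y ∈ Set.Ioc (f l) (f (l + 1)) := by
  have hy : y ∈ Set.Ioc (f m) (f n) := ⟨hm, hn⟩
  rw [← hf.biUnion_Ico_Ioc_map_succ] at hy
  simpa only [Set.mem_iUnion, exists_prop, Order.succ_eq_add_one] using hy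

section Offset

variable {i L : ℕ} {a : ℕ → ℕ}

/-- The end of the `n`-th block of length `L` when blocks of lengths `a_1, L, a_2, L, …` are laid
end to end from `0`, `a` being continued with period `i`. The shift of the coloring in row `v` is
`offset i L a (v - 1)`. -/
def offset (i L : ℕ) (a : ℕ → ℕ) (n : ℕ) : ℤ :=
  ∑ m ∈ range n, ((a (angMod (m + 1) i) : ℤ) + L)

/-- The gap of length `a_{n+1}` in front of the `(n + 1)`-st block of length `L`; these gaps contain
the colors of the interference nodes. -/
noncomputable def gap (i L : ℕ) (a : ℕ → ℕ) (n : ℕ) : Finset ℤ :=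
  Ioc (offset i L a n) (offset i L a n + a (angMod (n + 1) i))

lemma offset_succ (n : ℕ) :
    offset i L a (n + 1) = offset i L a n + (a (angMod (n + 1) i) + L) :=
  sum_range_succ _ _

lemma offset_monotone : Monotone (offset i L a) :=
  monotone_nat_of_le_succ fun n => by rw [offset_succ]; omega

lemma offset_add_period (n : ℕ) : offset i L a (n + i) = offset i L a n + offset i L a i := by
  have hperiodic (m : ℕ) : angMod ((i + m : ℕ) + 1) i = angMod (m + 1) i :=
    angMod_congr (by rw [Nat.cast_add, add_assoc]; exact Int.add_modEq_left)
  rw [add_comm n, add_comm (offset i L a n)]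
  simp only [offset, sum_range_add, hperiodic]

lemma offset_eq_sum_Icc {n : ℕ} (hn : n ≤ i) :
    offset i L a n = ∑ m ∈ Icc 1 n, (a m : ℤ) + n * L := by
  induction n with
  | zero => simp [offset]
  | succ n ih =>
    have hmod : angMod ((n : ℤ) + 1) i = n + 1 :=
      mod_cast angMod_natCast (mem_Icc.2 ⟨Nat.le_add_left 1 n, hn⟩)
    rw [offset_succ, ih (by omega), sum_Icc_succ_top (by omega), hmod]
    push_cast
    ring

lemma offset_add (n v : ℕ) :
    offset i L a (n + v) =
      offset i L a n + ∑ j ∈ Icc 1 v, (a (angMod ((n : ℤ) + v + 1 - j) i) : ℤ) + v * L := by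
  induction v generalizing n with
  | zero => simp
  | succ v ih =>
    have hlast : (n : ℤ) + (v + 1 : ℕ) + 1 - (v + 1 : ℕ) = n + 1 := by ring
    have hinit : (n : ℤ) + (v + 1 : ℕ) + 1 = (n + 1 : ℕ) + v + 1 := by push_cast; ring
    rw [sum_Icc_succ_top (by omega), hlast, hinit, ← add_assoc, add_right_comm n, ih (n + 1),
      offset_succ]
    push_cast
    ring

lemma card_biUnion_gap_le (N : ℕ) :
    (((range N).biUnion (gap i L a)).card : ℤ) ≤ offset i L a N - N * L := by
  have hcard : ((range N).biUnion (gap i L a)).card ≤ ∑ n ∈ range N, a (angMod (n + 1) i) :=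
    card_biUnion_le.trans_eq (sum_congr rfl fun n _ => by simp [gap])
  have hoffset : offset i L a N - N * L = ∑ n ∈ range N, (a (angMod (n + 1) i) : ℤ) := by
    simp [offset, sum_add_distrib]
  rw [hoffset]
  exact_mod_cast hcard

lemma offset_two_mul_sub_one (hi : 1 ≤ i) :
    offset i L a (2 * i - 1) = 2 * offset i L a i - a i - L := by
  have hlast : angMod (((2 * i - 1 : ℕ) : ℤ) + 1) i = i :=
    angMod_eq_of_modEq (mem_Icc.2 ⟨hi, le_rfl⟩) (by
      rw [show ((2 * i - 1 : ℕ) : ℤ) + 1 = i + i by omega]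
      exact Int.add_modEq_right)
  have hsucc := offset_succ (i := i) (L := L) (a := a) (2 * i - 1)
  rw [hlast, show 2 * i - 1 + 1 = i + i by omega, offset_add_period] at hsucc
  linarith

end Offset

section Interference

variable {i L K b k s : ℕ} {a : ℕ → ℕ}

lemma mem_knownIdx_of_mem_block (hK : (K : ℤ) = offset i L a i - L + 1)
    (hb : b ∈ Icc 1 K) (hs : s ∈ Icc 1 i) {n : ℕ} (hn : n ∈ Ico s (s - 1 + i)) {y : ℤ}
    (hlo : offset i L a n - L < y) (hhi : y ≤ offset i L a n)
    (hmod : k + offset i L a (s - 1) - y ≡ b [ZMOD K]) :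
    (b, s) ∈ knownIdx K i L a k := by
  rw [mem_Ico] at hn
  have hs1 := (mem_Icc.1 hs).1
  obtain ⟨v, hv⟩ := Nat.exists_eq_add_of_le hn.2.le
  refine ⟨s, hs, v, mem_Icc.2 (by omega), (offset i L a n - y + 1).toNat,
    mem_Icc.2 (by omega), rfl, (angMod_eq_of_modEq hb ?_).symm⟩
  have hsum := offset_add (i := i) (L := L) (a := a) n v
  rw [← hv, offset_add_period, show (n : ℤ) + v + 1 = i + s by omega] at hsum
  have hshift : (k : ℤ) + ∑ j ∈ Icc 1 v, (a (angMod ((i : ℤ) + s - j) i) : ℤ)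
      + ((v : ℤ) - 1) * L + (offset i L a n - y + 1) = k + offset i L a (s - 1) - y + K := by
    linarith
  rw [Int.toNat_of_nonneg (by omega), hshift]
  exact Int.add_modEq_right.trans hmod

lemma exists_mem_gap_of_notMem_knownIdx (hK : (K : ℤ) = offset i L a i - L + 1)
    (hk : k ∈ Icc 1 K) (hb : b ∈ Icc 1 K) (hs : s ∈ Icc 1 i) (hbk : b ≠ k)
    (hknown : (b, s) ∉ knownIdx K i L a k) :
    ∃ n < 2 * i - 1, ∃ y ∈ gap i L a n, k + offset i L a (s - 1) - y ≡ b [ZMOD K] := by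
  obtain ⟨d, hd_pos, hd_lt, hd⟩ := exists_sub_modEq_of_ne hk hb hbk
  have hmod : k + offset i L a (s - 1) - (offset i L a (s - 1) + d) ≡ b [ZMOD K] := by
    rwa [← sub_sub, add_sub_cancel_right]
  set y := offset i L a (s - 1) + d
  have hend : y ≤ offset i L a (s - 1 + i) - L := by rw [offset_add_period]; omega
  obtain ⟨n, ⟨hsn, hns⟩, hlo, hhi⟩ := exists_mem_Ioc_of_monotone offset_monotone
    (show offset i L a (s - 1) < y by omega) (show y ≤ offset i L a (s - 1 + i) by omega)
  have hsi := mem_Icc.1 hs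
  refine ⟨n, by omega, y, mem_Ioc.2 ⟨hlo, ?_⟩, hmod⟩
  by_contra! hgap
  have hblock : offset i L a (n + 1) - L < y := by rw [offset_succ]; omega
  have hnext : n + 1 ≠ s - 1 + i := fun h => by rw [h] at hblock; omega
  exact hknown (mem_knownIdx_of_mem_block hK hb hs (mem_Ico.2 (by omega)) hblock hhi hmod)

/-- The coloring of the problem: color `c` is given to one node in each row `v`, the user index
being shifted by `a_1 + ⋯ + a_{v-1} + (v - 1) L`. -/
def IsShiftColoring (K i L : ℕ) (a : ℕ → ℕ) (col : ℕ × ℕ → ℕ) : Prop :=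
  ∀ c ∈ Icc 1 K, ∀ v ∈ Icc 1 i,
    col (angMod ((c : ℤ) + (∑ m ∈ Icc 1 (v - 1), (a m : ℤ)) + ((v : ℤ) - 1) * (L : ℤ)) K, v) = c

variable {col : ℕ × ℕ → ℕ}

lemma color_eq_angMod (hcol : IsShiftColoring K i L a col) (hb : b ∈ Icc 1 K) (hs : s ∈ Icc 1 i) :
    col (b, s) = angMod (b - offset i L a (s - 1)) K := by
  have hK : 0 < K := (mem_Icc.1 hb).1.trans (mem_Icc.1 hb).2
  have hsi := mem_Icc.1 hs
  have hshift : offset i L a (s - 1) =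
      ∑ m ∈ Icc 1 (s - 1), (a m : ℤ) + ((s : ℤ) - 1) * L := by
    rw [offset_eq_sum_Icc (by omega), Nat.cast_pred hsi.1]
  have hnode := hcol _ (angMod_mem_Icc (b - offset i L a (s - 1)) hK) s hs
  rwa [add_assoc, ← hshift, angMod_eq_of_modEq hb] at hnode
  simpa using (angMod_modEq (b - offset i L a (s - 1)) hK).add_right (offset i L a (s - 1))

lemma color_mem_image_gap (hK : (K : ℤ) = offset i L a i - L + 1)
    (hcol : IsShiftColoring K i L a col) (hk : k ∈ Icc 1 K) (hb : b ∈ Icc 1 K)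
    (hs : s ∈ Icc 1 i) (hbk : b ≠ k) (hknown : (b, s) ∉ knownIdx K i L a k) :
    col (b, s) ∈ ((range (2 * i - 1)).biUnion (gap i L a)).image fun y => angMod (k - y) K := by
  obtain ⟨n, hn, y, hy, hmod⟩ := exists_mem_gap_of_notMem_knownIdx hK hk hb hs hbk hknown
  refine mem_image.2 ⟨y, mem_biUnion.2 ⟨n, mem_range.2 hn, hy⟩, ?_⟩
  rw [color_eq_angMod hcol hb hs]
  refine angMod_congr ?_
  convert hmod.sub_right (offset i L a (s - 1)) using 1
  ring

lemma ncard_image_closedAnti_le (hi : 1 ≤ i) (hK : (K : ℤ) = offset i L a i - L + 1)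
    (hcol : IsShiftColoring K i L a col) (hk : k ∈ Icc 1 K) (t : ℕ) :
    ((col '' closedAnti K i L a k t).ncard : ℤ) ≤ 2 * (K - (i - 1) * L) - 1 - a i := by
  set gaps := (range (2 * i - 1)).biUnion (gap i L a)
  have hsub : col '' closedAnti K i L a k t ⊆
      (insert (col (k, t)) (gaps.image fun y => angMod (k - y) K) : Finset ℕ) := by
    rintro _ ⟨⟨b, s⟩, ⟨hb, hs, hself | ⟨hbk, hknown⟩⟩, rfl⟩
    · exact mem_insert.2 (.inl (congrArg col hself))
    · exact mem_insert_of_mem (color_mem_image_gap hK hcol hk hb hs hbk hknown)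
  have hcard : (col '' closedAnti K i L a k t).ncard ≤ gaps.card + 1 := by
    refine (Set.ncard_le_ncard hsub (finite_toSet _)).trans ?_
    rw [Set.ncard_coe_finset]
    exact (card_insert_le _ _).trans (Nat.add_le_add_right card_image_le 1)
  calc ((col '' closedAnti K i L a k t).ncard : ℤ)
      ≤ gaps.card + 1 := mod_cast hcard
    _ ≤ offset i L a (2 * i - 1) - (2 * i - 1 : ℕ) * L + 1 := by
      gcongr; exact card_biUnion_gap_le _
    _ = 2 * (K - (i - 1) * L) - 1 - a i := by
      rw [offset_two_mul_sub_one hi, hK]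
      push_cast [show 1 ≤ 2 * i by omega]
      ring

lemma ncard_image_closedAnti_le_card_colors (hcol : IsShiftColoring K i L a col)
    (k t : ℕ) :
    (col '' closedAnti K i L a k t).ncard ≤ K := by
  have hsub : col '' closedAnti K i L a k t ⊆ (Icc 1 K : Finset ℕ) := by
    rintro _ ⟨⟨b, s⟩, ⟨hb, hs, -⟩, rfl⟩
    rw [color_eq_angMod hcol hb hs]
    exact angMod_mem_Icc _ ((mem_Icc.1 hb).1.trans (mem_Icc.1 hb).2)
  simpa using Set.ncard_le_ncard hsub (finite_toSet _)

end Interference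

theorem stmt8_general (i L : ℕ) (hi : 1 ≤ i) (a : ℕ → ℕ)
    (K : ℕ) (hK : K = (i - 1) * L + (∑ j ∈ Icc 1 i, a j) + 1)
    (col : ℕ × ℕ → ℕ)
    (hcol : ∀ c ∈ Icc 1 K, ∀ v ∈ Icc 1 i,
      col (angMod ((c : ℤ) + (∑ m ∈ Icc 1 (v - 1), (a m : ℤ)) + ((v : ℤ) - 1) * (L : ℤ)) K, v) = c)
    (k t : ℕ) (hk : k ∈ Icc 1 K) :
    ((col '' closedAnti K i L a k t).ncard : ℝ) ≤
      min (2 * ((K : ℝ) - ((i : ℝ) - 1) * (L : ℝ)) - 1 - (a i : ℝ)) (K : ℝ) := by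
  have hKoffset : (K : ℤ) = offset i L a i - L + 1 := by
    rw [offset_eq_sum_Icc le_rfl, hK]
    push_cast [hi]
    ring
  refine le_min ?_ (mod_cast ncard_image_closedAnti_le_card_colors hcol k t)
  exact_mod_cast ncard_image_closedAnti_le hi hKoffset hcol hk t

/-- under the coloring assigning, for each `c ∈ [K]`, color `c`
to the nodes `(<c + Σ_{m=1}^{v−1} a_m + (v−1)L>_K, v)` for `v ∈ [i]`, the number
of distinct colors on the closed anti-outneighborhood of any node is at most
`min{2(K−(i−1)L)+i−2−a_i, K}`. -/
theorem stmt8 (i L : ℕ) (hi : 1 ≤ i) (hL : 1 ≤ L) (a : ℕ → ℕ)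
    (hmax : ∀ j ∈ Finset.Icc 1 i, a j ≤ a i)
    (K : ℕ) (hK : K = (i - 1) * L + (∑ j ∈ Finset.Icc 1 i, a j) + 1)
    (col : ℕ × ℕ → ℕ)
    (hcol : ∀ c ∈ Finset.Icc 1 K, ∀ v ∈ Finset.Icc 1 i,
      col (angMod ((c : ℤ) + (∑ m ∈ Finset.Icc 1 (v - 1), (a m : ℤ))
          + ((v : ℤ) - 1) * (L : ℤ)) K, v) = c)
    (k t : ℕ) (hk : k ∈ Finset.Icc 1 K) (ht : t ∈ Finset.Icc 1 i) :
    ((col '' closedAnti K i L a k t).ncard : ℝ) ≤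
      min (2 * ((K : ℝ) - ((i : ℝ) - 1) * (L : ℝ)) + (i : ℝ) - 2 - (a i : ℝ)) (K : ℝ) := by
  have hi_real : (1 : ℝ) ≤ i := mod_cast hi
  exact (stmt8_general i L hi a K hK col hcol k t hk).trans (min_le_min_right _ (by linarith))
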